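/- Let q be a natural number with q ≥ 5 and q ≡ 1 (mod 4), and let m be a natural number with 1 ≤ m ≤ q. Then there exist natural numbers α and β such that 4m = α·q + β·(q+1) if and only if m = (q+1)/2, or m = (3q+1)/4, or m = q. -/

import Mathlib

/-- Arithmetic core of Theorem 5.2: for `q ≥ 5`, `q ≡ 1 (mod 4)` and `1 ≤ m ≤ q`,
`4m` lies in the numerical semigroup generated by `q` and `q+1` if and only if
`m = (q+1)/2`, `m = (3q+1)/4` or `m = q`. -/
theorem stmt_11 (q m : ℕ) (hq5 : 5 ≤ q) (hq : q % 4 = 1) (hm1 : 1 ≤ m) (hmq : m ≤ q) :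
    (∃ α β : ℕ, 4 * m = α * q + β * (q + 1)) ↔
      m = (q + 1) / 2 ∨ m = (3 * q + 1) / 4 ∨ m = q := by
  constructor
  · rintro ⟨a, b, h⟩
    have hs : a + b ≤ 4 := by
      by_contra hc
      have h5 : 5 ≤ a + b := by omega
      have h6 : 5 * q ≤ (a + b) * q := Nat.mul_le_mul_right q h5
      have h7 : 4 * m = (a + b) * q + b := by rw [h]; ring
      omega
    have ha : a ≤ 4 := by omega
    have hb : b ≤ 4 := by omega
    interval_cases a <;> interval_cases b <;> omega
  · rintro (h | h | h)
    · exact ⟨0, 2, by omega⟩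
    · exact ⟨2, 1, by omega⟩
    · exact ⟨4, 0, by omega⟩
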